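/- For all real x with 0 < x < 1, one has α·x·Φ(x⁴, 3/2, 1/4) < arcsl(x) < β·x·Φ(x⁴, 3/2, 1/4), where α = 1/8 and β = arcsl(1)/Φ(1, 3/2, 1/4). -/

import Mathlib

/-- The arc lemniscate sine function: `arcsl x = ∫₀ˣ dt / √(1 - t⁴)`. -/
noncomputable def arcsl (x : ℝ) : ℝ := ∫ t in (0:ℝ)..x, 1 / Real.sqrt (1 - t ^ 4)

/-- The Lerch zeta function: `Φ(z, s, a) = ∑ₖ zᵏ / (k + a)ˢ`. -/
noncomputable def lerchPhi (z s a : ℝ) : ℝ := ∑' k : ℕ, z ^ k / ((k : ℝ) + a) ^ s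

/-!
Integrating the binomial series termwise gives `arcsl x = x * S (x ^ 4)` with
`S z = ∑ₖ cₖ zᵏ / (4 k + 1)` and `cₖ = (1/2)(3/2)⋯(k - 1/2) / k!`. The quotient of the `k`-th
coefficients of `S` and of `Φ(·, 3/2, 1/4)` is `√((k + 1/4) cₖ²) / 4`, which increases strictly
with `k`. By Chebyshev's sum inequality a quotient of power series inherits the monotonicity of
the quotient of their coefficients, so `S z / Φ(z, 3/2, 1/4)` is strictly increasing on `[0, 1]`;
`α` and `β` are its values at `0` and `1`.
-/

open Set MeasureTheory

theorem mul_lt_mul_of_hasSum_of_strictMono_of_antitone {ι : Type*} [LinearOrder ι]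
    {w r s : ι → ℝ} {W R S T : ℝ} (hw : ∀ k, 0 < w k) (hr : StrictMono r) (hs : Antitone s)
    {i j : ι} (hij : s i ≠ s j) (hW : HasSum w W) (hR : HasSum (fun k => w k * r k) R)
    (hS : HasSum (fun k => w k * s k) S) (hT : HasSum (fun k => w k * (r k * s k)) T) :
    W * T < R * S := by
  have cross_nonpos (m k : ι) : (r k - r m) * (s k - s m) ≤ 0 :=
    (hr.monotone.antivary hs).sub_mul_sub_nonpos m k
  have cross_neg (m : ι) : ∃ k, (r k - r m) * (s k - s m) < 0 := by
    obtain ⟨k, hk⟩ : ∃ k, s k ≠ s m := by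
      by_contra! h
      exact hij ((h i).trans (h j).symm)
    have hkm : k ≠ m := fun h => hk (congrArg s h)
    exact ⟨k, (cross_nonpos m k).lt_of_ne
      (mul_ne_zero (sub_ne_zero.2 (hr.injective.ne hkm)) (sub_ne_zero.2 hk))⟩
  -- Summing `w m * w k * (r k - r m) * (s k - s m)` over `k` and then over `m` gives
  -- `2 * (W * T - R * S)`; iterating the sums avoids any summability question on `ι × ι`.
  have inner_hasSum (m : ι) : HasSum (fun k => w k * ((r k - r m) * (s k - s m)))
      (T - s m * R - r m * S + r m * s m * W) :=
    (((hT.sub (hR.mul_left (s m))).sub (hS.mul_left (r m))).add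
      (hW.mul_left (r m * s m))).congr_fun fun k => by ring
  have inner_neg (m : ι) : T - s m * R - r m * S + r m * s m * W < 0 := by
    obtain ⟨k, hk⟩ := cross_neg m
    exact hasSum_lt (fun k => mul_nonpos_of_nonneg_of_nonpos (hw k).le (cross_nonpos m k))
      (mul_neg_of_pos_of_neg (hw k) hk) (inner_hasSum m) hasSum_zero
  have outer_hasSum : HasSum (fun m => w m * (T - s m * R - r m * S + r m * s m * W))
      (T * W - R * S - S * R + W * T) :=
    ((((hW.mul_left T).sub (hS.mul_left R)).sub (hR.mul_left S)).add
      (hT.mul_left W)).congr_fun fun m => by ring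
  have total_neg := hasSum_lt (fun m => (mul_neg_of_pos_of_neg (hw m) (inner_neg m)).le)
    (mul_neg_of_pos_of_neg (hw i) (inner_neg i)) outer_hasSum hasSum_zero
  linarith

/-- The Biernacki–Krzyż lemma. For `z < w` it is Chebyshev's inequality for the increasing ratios
`a k / b k` and the decreasing powers `(z / w) ^ k`, with weights `b k * w ^ k`. -/
theorem strictMonoOn_div_of_hasSum_mul_pow {a b : ℕ → ℝ} {A B : ℝ → ℝ} {D : Set ℝ}
    (hD : D ⊆ Ici 0) (hb : ∀ k, 0 < b k) (hab : StrictMono fun k => a k / b k)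
    (hA : ∀ z ∈ D, HasSum (fun k => a k * z ^ k) (A z))
    (hB : ∀ z ∈ D, HasSum (fun k => b k * z ^ k) (B z)) :
    StrictMonoOn (fun z => A z / B z) D := by
  have B_pos {z : ℝ} (hz : z ∈ D) : 0 < B z :=
    hasSum_lt (i := 0) (fun k => mul_nonneg (hb k).le (pow_nonneg (hD hz) k))
      (by simpa using hb 0) hasSum_zero (hB z hz)
  intro z hz w hw hzw
  have z_nonneg : 0 ≤ z := hD hz
  have w_pos : 0 < w := z_nonneg.trans_lt hzw
  have ratio_nonneg : 0 ≤ z / w := by positivity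
  have ratio_lt_one : z / w < 1 := (div_lt_one w_pos).2 hzw
  have rescale (k : ℕ) : w ^ k * (z / w) ^ k = z ^ k := by
    rw [← mul_pow, mul_div_cancel₀ _ w_pos.ne']
  have cancel (k : ℕ) : b k * (a k / b k) = a k := mul_div_cancel₀ _ (hb k).ne'
  have key : B w * A z < A w * B z := by
    refine mul_lt_mul_of_hasSum_of_strictMono_of_antitone
      (w := fun k => b k * w ^ k) (s := fun k => (z / w) ^ k) (i := 0) (j := 1)
      (fun k => mul_pos (hb k) (pow_pos w_pos k)) hab
      (pow_right_anti₀ ratio_nonneg ratio_lt_one.le) (by simpa using ratio_lt_one.ne')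
      (hB w hw) ?_ ?_ ?_
    · simpa only [mul_right_comm, cancel] using hA w hw
    · simpa only [mul_assoc, rescale] using hB z hz
    · simpa only [mul_mul_mul_comm, cancel, rescale] using hA z hz
  rw [div_lt_div_iff₀ (B_pos hz) (B_pos hw)]
  linarith

theorem hasSum_intervalIntegral_of_hasSum_mul_pow {ι : Type*} [Countable ι] {c : ι → ℝ}
    {n : ι → ℕ} {f : ℝ → ℝ} {x : ℝ} (hx : 0 ≤ x) (hc : ∀ k, 0 ≤ c k)
    (hf : ∀ t ∈ Ioo 0 x, HasSum (fun k => c k * t ^ n k) (f t))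
    (hsum : Summable fun k => c k * (x ^ (n k + 1) / (n k + 1))) :
    HasSum (fun k => c k * (x ^ (n k + 1) / (n k + 1))) (∫ t in 0..x, f t) := by
  have integral_term (k : ι) :
      ∫ t in Ioc 0 x, c k * t ^ n k = c k * (x ^ (n k + 1) / (n k + 1)) := by
    rw [← intervalIntegral.integral_of_le hx, intervalIntegral.integral_const_mul, integral_pow]
    simp
  have integral_norm_term (k : ι) :
      ∫ t in Ioc 0 x, ‖c k * t ^ n k‖ = c k * (x ^ (n k + 1) / (n k + 1)) := by
    rw [← integral_term]
    refine setIntegral_congr_fun measurableSet_Ioc fun t ht => ?_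
    exact Real.norm_of_nonneg (mul_nonneg (hc k) (pow_nonneg ht.1.le _))
  have integrable_term (k : ι) : Integrable (fun t => c k * t ^ n k) (volume.restrict (Ioc 0 x)) :=
    (Continuous.intervalIntegrable (by fun_prop) 0 x).1
  have h := hasSum_integral_of_summable_integral_norm integrable_term
    (by simpa only [integral_norm_term] using hsum)
  have integral_tsum : ∫ t in Ioc 0 x, ∑' k, c k * t ^ n k = ∫ t in 0..x, f t := by
    rw [← intervalIntegral.integral_of_le hx]
    exact intervalIntegral.integral_congr_Ioo_of_le hx fun t ht => (hf t ht).tsum_eq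
  simpa only [integral_term, integral_tsum] using h

theorem add_one_mul_multichoose_succ {R : Type*} [CommRing R] [BinomialRing R] (a : R) (k : ℕ) :
    ((k : R) + 1) * Ring.multichoose a (k + 1) = (a + k) * Ring.multichoose a k := by
  have hk := Ring.factorial_nsmul_multichoose_eq_ascPochhammer a k
  have hk' := Ring.factorial_nsmul_multichoose_eq_ascPochhammer a (k + 1)
  rw [Polynomial.ascPochhammer_smeval_eq_eval] at hk hk'
  rw [ascPochhammer_succ_eval, ← hk] at hk'
  have : IsAddTorsionFree R := BinomialRing.toIsAddTorsionFree
  refine nsmul_right_injective k.factorial_ne_zero ?_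
  simp only [nsmul_eq_mul, Nat.factorial_succ, Nat.cast_mul, Nat.cast_add, Nat.cast_one] at hk' ⊢
  linear_combination hk'

theorem multichoose_pos {R : Type*} [CommRing R] [LinearOrder R] [IsStrictOrderedRing R]
    [BinomialRing R] {a : R} (ha : 0 < a) (k : ℕ) : 0 < Ring.multichoose a k := by
  induction k with
  | zero => simp
  | succ k ih =>
    have h : 0 < ((k : R) + 1) * Ring.multichoose a (k + 1) := by
      rw [add_one_mul_multichoose_succ]
      positivity
    exact pos_of_mul_pos_right h (by positivity)

theorem hasSum_multichoose_mul_pow (a : ℝ) {u : ℝ} (hu : |u| < 1) :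
    HasSum (fun k => Ring.multichoose a k * u ^ k) (1 / (1 - u) ^ a) := by
  have h := (Real.one_div_one_sub_rpow_hasFPowerSeriesOnBall_zero a).hasSum (y := u) (by
    rw [← ENNReal.ofReal_one, Metric.eball_ofReal]
    simpa using hu)
  simpa [Ring.multichoose_eq, mul_comm] using h

theorem multichoose_half_succ (k : ℕ) : Ring.multichoose (1 / 2 : ℝ) (k + 1) =
    (1 / 2 + k) / (k + 1) * Ring.multichoose (1 / 2 : ℝ) k := by
  have h := add_one_mul_multichoose_succ (1 / 2 : ℝ) k
  field_simp
  linarith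

theorem strictMono_mul_multichoose_half_sq :
    StrictMono fun k : ℕ => ((k : ℝ) + 1 / 4) * Ring.multichoose (1 / 2 : ℝ) k ^ 2 := by
  refine strictMono_nat_of_lt_succ fun k => ?_
  have factor_lt : (k : ℝ) + 1 / 4 < ((k : ℝ) + 1 + 1 / 4) * ((1 / 2 + k) / (k + 1)) ^ 2 := by
    rw [div_pow, mul_div_assoc', lt_div_iff₀ (by positivity)]
    nlinarith
  have := multichoose_pos (a := (1 / 2 : ℝ)) (by norm_num) k
  rw [multichoose_half_succ, mul_pow, ← mul_assoc]
  push_cast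
  gcongr

theorem mul_multichoose_half_sq_le_one (k : ℕ) :
    (2 * (k : ℝ) + 1) * Ring.multichoose (1 / 2 : ℝ) k ^ 2 ≤ 1 := by
  induction k with
  | zero => simp
  | succ k ih =>
    have factor_le : (2 * ((k : ℝ) + 1) + 1) * ((1 / 2 + k) / (k + 1)) ^ 2 ≤ 2 * k + 1 := by
      rw [div_pow, mul_div_assoc', div_le_iff₀ (by positivity)]
      nlinarith
    refine le_trans ?_ ih
    rw [multichoose_half_succ, mul_pow, ← mul_assoc]
    push_cast
    gcongr

section Lerch

variable {s a : ℝ}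

theorem summable_inv_natCast_add_rpow (hs : 1 < s) (ha : 0 < a) :
    Summable fun k : ℕ => (((k : ℝ) + a) ^ s)⁻¹ := by
  refine ((Real.summable_one_div_nat_add_rpow a s).2 hs).congr fun k => ?_
  rw [abs_of_pos (by positivity), one_div]

theorem hasSum_lerchPhi (hs : 1 < s) (ha : 0 < a) {z : ℝ} (hz : |z| ≤ 1) :
    HasSum (fun k : ℕ => (((k : ℝ) + a) ^ s)⁻¹ * z ^ k) (lerchPhi z s a) := by
  have h : Summable fun k : ℕ => (((k : ℝ) + a) ^ s)⁻¹ * z ^ k := by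
    refine (summable_inv_natCast_add_rpow hs ha).of_norm_bounded fun k => ?_
    rw [norm_mul, norm_pow, Real.norm_of_nonneg (by positivity)]
    exact mul_le_of_le_one_right (by positivity) (pow_le_one₀ (abs_nonneg z) hz)
  simpa only [lerchPhi, div_eq_inv_mul] using h.hasSum

theorem lerchPhi_pos (hs : 1 < s) (ha : 0 < a) {z : ℝ} (hz0 : 0 ≤ z) (hz1 : z ≤ 1) :
    0 < lerchPhi z s a :=
  hasSum_lt (i := 0) (fun k => by positivity) (by simpa using Real.rpow_pos_of_pos ha s)
    hasSum_zero (hasSum_lerchPhi hs ha ((abs_of_nonneg hz0).trans_le hz1))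

theorem lerchPhi_zero_left (s a : ℝ) : lerchPhi 0 s a = (a ^ s)⁻¹ := by
  rw [lerchPhi, tsum_eq_single 0 fun k hk => by simp [hk]]
  simp

end Lerch

/-- The coefficient of `x ^ (4 * k + 1)` in the Maclaurin series of `arcsl`; the numerator is
`(1/2)(3/2)⋯(k - 1/2) / k!`. -/
noncomputable def arcslCoeff (k : ℕ) : ℝ := Ring.multichoose (1 / 2 : ℝ) k / (4 * k + 1)

/-- The power series `∑ₖ arcslCoeff k * zᵏ`, which represents `arcsl x / x` at `z = x ^ 4` and,
unlike that quotient, has the right value at `0`. -/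
noncomputable def arcslSeries (z : ℝ) : ℝ := ∑' k, arcslCoeff k * z ^ k

theorem arcslCoeff_pos (k : ℕ) : 0 < arcslCoeff k :=
  div_pos (multichoose_pos (by norm_num) k) (by positivity)

theorem arcslCoeff_mul_rpow (k : ℕ) : arcslCoeff k * ((k : ℝ) + 1 / 4) ^ (3 / 2 : ℝ) =
    √(((k : ℝ) + 1 / 4) * Ring.multichoose (1 / 2 : ℝ) k ^ 2) / 4 := by
  have hk : (0 : ℝ) < k + 1 / 4 := by positivity
  have rpow_eq : ((k : ℝ) + 1 / 4) ^ (3 / 2 : ℝ) = (k + 1 / 4) * √(k + 1 / 4) := by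
    rw [show (3 / 2 : ℝ) = 1 + 1 / 2 by norm_num, Real.rpow_add hk, Real.rpow_one,
      Real.sqrt_eq_rpow]
  rw [rpow_eq, Real.sqrt_mul hk.le, Real.sqrt_sq (multichoose_pos (by norm_num) k).le, arcslCoeff]
  field_simp

theorem strictMono_arcslCoeff_div :
    StrictMono fun k : ℕ => arcslCoeff k / (((k : ℝ) + 1 / 4) ^ (3 / 2 : ℝ))⁻¹ := by
  intro i j hij
  simp only [div_inv_eq_mul, arcslCoeff_mul_rpow]
  refine div_lt_div_of_pos_right (Real.sqrt_lt_sqrt (by positivity) ?_) (by norm_num)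
  exact strictMono_mul_multichoose_half_sq hij

theorem arcslCoeff_le (k : ℕ) : arcslCoeff k ≤ (((k : ℝ) + 1 / 4) ^ (3 / 2 : ℝ))⁻¹ := by
  rw [← one_div, le_div_iff₀ (by positivity), arcslCoeff_mul_rpow,
    div_le_one (by norm_num), Real.sqrt_le_left (by norm_num)]
  nlinarith [mul_multichoose_half_sq_le_one k, sq_nonneg (Ring.multichoose (1 / 2 : ℝ) k)]

theorem summable_arcslCoeff : Summable arcslCoeff :=
  (summable_inv_natCast_add_rpow (by norm_num) (by norm_num)).of_nonneg_of_le
    (fun k => (arcslCoeff_pos k).le) arcslCoeff_le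

theorem hasSum_arcslSeries {z : ℝ} (hz : |z| ≤ 1) :
    HasSum (fun k => arcslCoeff k * z ^ k) (arcslSeries z) := by
  refine (summable_arcslCoeff.of_norm_bounded fun k => ?_).hasSum
  rw [norm_mul, norm_pow, Real.norm_of_nonneg (arcslCoeff_pos k).le]
  exact mul_le_of_le_one_right (arcslCoeff_pos k).le (pow_le_one₀ (abs_nonneg z) hz)

theorem arcslSeries_zero : arcslSeries 0 = 1 := by
  rw [arcslSeries, tsum_eq_single 0 fun k hk => by simp [hk]]
  simp [arcslCoeff]

theorem arcsl_eq_mul_arcslSeries {x : ℝ} (hx : x ∈ Icc 0 1) :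
    arcsl x = x * arcslSeries (x ^ 4) := by
  have integrand_hasSum : ∀ t ∈ Ioo 0 x,
      HasSum (fun k => Ring.multichoose (1 / 2 : ℝ) k * t ^ (4 * k)) (1 / √(1 - t ^ 4)) := by
    intro t ht
    have ht4 : |t ^ 4| < 1 := by
      rw [abs_of_nonneg (by positivity)]
      exact pow_lt_one₀ ht.1.le (ht.2.trans_le hx.2) (by norm_num)
    simpa only [pow_mul, Real.sqrt_eq_rpow] using hasSum_multichoose_mul_pow (1 / 2) ht4
  have term_eq (k : ℕ) : Ring.multichoose (1 / 2 : ℝ) k *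
      (x ^ (4 * k + 1) / ((4 * k : ℕ) + 1)) = x * (arcslCoeff k * (x ^ 4) ^ k) := by
    rw [arcslCoeff]
    push_cast
    ring
  have hx4 : |x ^ 4| ≤ 1 := by
    rw [abs_of_nonneg (by positivity)]
    exact pow_le_one₀ hx.1 hx.2
  have series_hasSum := (hasSum_arcslSeries hx4).mul_left x
  simp only [← term_eq] at series_hasSum
  exact (hasSum_intervalIntegral_of_hasSum_mul_pow hx.1
    (fun k => (multichoose_pos (by norm_num) k).le) integrand_hasSum
    series_hasSum.summable).unique series_hasSum

theorem arcslSeries_div_lerchPhi_zero : arcslSeries 0 / lerchPhi 0 (3 / 2) (1 / 4) = 1 / 8 := by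
  rw [arcslSeries_zero, lerchPhi_zero_left, one_div, inv_inv,
    show (1 / 4 : ℝ) = (1 / 2) ^ (2 : ℝ) by norm_num, ← Real.rpow_mul (by norm_num)]
  norm_num

theorem strictMonoOn_arcslSeries_div_lerchPhi :
    StrictMonoOn (fun z => arcslSeries z / lerchPhi z (3 / 2) (1 / 4)) (Icc 0 1) := by
  have abs_le {z : ℝ} (hz : z ∈ Icc 0 1) : |z| ≤ 1 := (abs_of_nonneg hz.1).trans_le hz.2
  exact strictMonoOn_div_of_hasSum_mul_pow Icc_subset_Ici_self (fun k => by positivity)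
    strictMono_arcslCoeff_div (fun z hz => hasSum_arcslSeries (abs_le hz))
    (fun z hz => hasSum_lerchPhi (by norm_num) (by norm_num) (abs_le hz))

theorem arcsl_sharp_bounds (x : ℝ) (hx0 : 0 < x) (hx1 : x < 1) :
    (1 / 8) * x * lerchPhi (x ^ 4) (3 / 2) (1 / 4) < arcsl x ∧
      arcsl x <
        (arcsl 1 / lerchPhi 1 (3 / 2) (1 / 4)) * x * lerchPhi (x ^ 4) (3 / 2) (1 / 4) := by
  have hmono := strictMonoOn_arcslSeries_div_lerchPhi
  have hz : x ^ 4 ∈ Ioo 0 1 := ⟨by positivity, pow_lt_one₀ hx0.le hx1 (by norm_num)⟩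
  have hΦ : 0 < lerchPhi (x ^ 4) (3 / 2) (1 / 4) :=
    lerchPhi_pos (by norm_num) (by norm_num) hz.1.le hz.2.le
  have arcsl_one : arcsl 1 = arcslSeries 1 := by
    simpa using arcsl_eq_mul_arcslSeries (right_mem_Icc.2 zero_le_one)
  have lower : 1 / 8 < arcslSeries (x ^ 4) / lerchPhi (x ^ 4) (3 / 2) (1 / 4) :=
    arcslSeries_div_lerchPhi_zero.symm.trans_lt
      (hmono (left_mem_Icc.2 zero_le_one) (Ioo_subset_Icc_self hz) hz.1)
  have upper : arcslSeries (x ^ 4) / lerchPhi (x ^ 4) (3 / 2) (1 / 4) <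
      arcsl 1 / lerchPhi 1 (3 / 2) (1 / 4) :=
    arcsl_one ▸ hmono (Ioo_subset_Icc_self hz) (right_mem_Icc.2 zero_le_one) hz.2
  rw [lt_div_iff₀ hΦ] at lower
  rw [div_lt_iff₀ hΦ] at upper
  rw [arcsl_eq_mul_arcslSeries ⟨hx0.le, hx1.le⟩, mul_right_comm, mul_right_comm _ x,
    mul_comm _ x, mul_comm _ x]
  exact ⟨mul_lt_mul_of_pos_left lower hx0, mul_lt_mul_of_pos_left upper hx0⟩
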